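/- Let (R,B) be an EIC problem with problem graph G, column repetition function φ_{(R,B)}, and 𝒜_{(R,B)} the image of φ_{(R,B)}. Then the minimum length of a centralized linear broadcast solution equals the restricted minrank: (C)_{(R,B)} = rminrk_2(G, 𝒜_{(R,B)}). -/

import Mathlib

open Matrix BigOperators

namespace EIC

variable {n m : ℕ}

/-- The vertex set of the problem graph of the EIC problem `(R, B)`:
one vertex for each requirement pair `(u, a)` with `R u a = 1`. -/
abbrev Vtx (R : Matrix (Fin n) (Fin m) (ZMod 2)) : Type :=
  {p : Fin n × Fin m // R p.1 p.2 = 1}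

/-- `(R, B)` have disjoint supports: no position has both `B = 1` and `R = 1`. -/
def DisjointSupports (R B : Matrix (Fin n) (Fin m) (ZMod 2)) : Prop :=
  ∀ u a, ¬(B u a = 1 ∧ R u a = 1)

/-- The standard basis vector `e_a ∈ F_2^m`. -/
def e (m : ℕ) (a : Fin m) : Fin m → ZMod 2 := Pi.single a 1

/-- `β` (with rows indexed by `ι`) is a centralized linear broadcast solution to `(R, B)`:
for every requirement pair `(u, a)` there is `α` with `e_a = α · [β ; diag(B_u)]`. -/
def IsCentralizedSolution (R B : Matrix (Fin n) (Fin m) (ZMod 2))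
    {ι : Type} [Fintype ι] (β : Matrix ι (Fin m) (ZMod 2)) : Prop :=
  ∀ u a, R u a = 1 →
    ∃ α : ι ⊕ Fin m → ZMod 2,
      e m a = α ᵥ* Matrix.fromRows β (Matrix.diagonal (B u))

/-- `(C)_{(R,B)}`: the minimum length of a centralized linear broadcast solution. -/
noncomputable def Copt (R B : Matrix (Fin n) (Fin m) (ZMod 2)) : ℕ :=
  sInf {h | ∃ β : Matrix (Fin h) (Fin m) (ZMod 2), IsCentralizedSolution R B β}

/-- The vertical concatenation of the matrices `β u`, `u ∈ [n]`. -/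
def vconcat {h : Fin n → ℕ} (β : ∀ u : Fin n, Matrix (Fin (h u)) (Fin m) (ZMod 2)) :
    Matrix ((ℓ : Fin n) × Fin (h ℓ)) (Fin m) (ZMod 2) :=
  Matrix.of fun p => β p.1 p.2

/-- `β⁽¹⁾, …, β⁽ⁿ⁾` is a (decentralized) linear broadcast solution to `(R, B)`. -/
def IsBroadcastSolution (R B : Matrix (Fin n) (Fin m) (ZMod 2))
    {h : Fin n → ℕ} (β : ∀ u : Fin n, Matrix (Fin (h u)) (Fin m) (ZMod 2)) : Prop :=
  (∀ u a, B u a = 0 → ∀ i, β u i a = 0) ∧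
  ∀ u a, R u a = 1 →
    ∃ α : ((ℓ : Fin n) × Fin (h ℓ)) ⊕ Fin m → ZMod 2,
      e m a = α ᵥ* Matrix.fromRows (vconcat β) (Matrix.diagonal (B u))

/-- `(D)_{(R,B)}`: the minimum length of a decentralized linear broadcast solution. -/
noncomputable def Dopt (R B : Matrix (Fin n) (Fin m) (ZMod 2)) : ℕ :=
  sInf {s | ∃ (h : Fin n → ℕ) (β : ∀ u : Fin n, Matrix (Fin (h u)) (Fin m) (ZMod 2)),
    IsBroadcastSolution R B β ∧ ∑ u, h u = s}

/-- A task-based solution: a linear broadcast solution where every requirement pair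
`(u, a)` can be decoded from the broadcast of a single responsible sender `ℓ`. -/
def IsTaskBased (R B : Matrix (Fin n) (Fin m) (ZMod 2))
    {h : Fin n → ℕ} (β : ∀ u : Fin n, Matrix (Fin (h u)) (Fin m) (ZMod 2)) : Prop :=
  IsBroadcastSolution R B β ∧
  ∀ u a, R u a = 1 → ∃ ℓ : Fin n, ∃ α : Fin (h ℓ) ⊕ Fin m → ZMod 2,
    e m a = α ᵥ* Matrix.fromRows (β ℓ) (Matrix.diagonal (B u))

/-- `(T)_{(R,B)}`: the minimum length of a task-based solution. -/
noncomputable def Topt (R B : Matrix (Fin n) (Fin m) (ZMod 2)) : ℕ :=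
  sInf {s | ∃ (h : Fin n → ℕ) (β : ∀ u : Fin n, Matrix (Fin (h u)) (Fin m) (ZMod 2)),
    IsTaskBased R B β ∧ ∑ u, h u = s}

/-- The edge relation of the problem graph: for distinct requirement pairs `(u,a)`, `(w,b)`,
there is an edge from `v_{(u,a)}` to `v_{(w,b)}` iff `B u b = 1` or `a = b`. -/
def probEdge (R B : Matrix (Fin n) (Fin m) (ZMod 2)) (v w : Vtx R) : Prop :=
  v ≠ w ∧ (B v.1.1 w.1.2 = 1 ∨ v.1.2 = w.1.2)

/-- A matrix `A` fits a directed graph with edge relation `E`. -/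
def Fits {V : Type} (E : V → V → Prop) (A : Matrix V V (ZMod 2)) : Prop :=
  (∀ k, A k k = 1) ∧ ∀ k l, k ≠ l → ¬ E k l → A k l = 0

/-- `minrk₂`: the minimum `F₂`-rank of a matrix fitting the graph. -/
noncomputable def minrk {V : Type} [Fintype V] (E : V → V → Prop) : ℕ :=
  sInf {r | ∃ A : Matrix V V (ZMod 2), Fits E A ∧ A.rank = r}

/-- `rminrk₂`: the minimum `F₂`-rank of a matrix in `𝒜` fitting the graph. -/
noncomputable def rminrk {V : Type} [Fintype V] (E : V → V → Prop)
    (𝒜 : Set (Matrix V V (ZMod 2))) : ℕ :=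
  sInf {r | ∃ A ∈ 𝒜, Fits E A ∧ A.rank = r}

/-- The column repetition function `φ_{(R,B)}`: the column of `φ(A)` indexed by
`v_{(u,a)}` is the `a`-th column of `A`. -/
def phi (R : Matrix (Fin n) (Fin m) (ZMod 2))
    (A : Matrix (Vtx R) (Fin m) (ZMod 2)) : Matrix (Vtx R) (Vtx R) (ZMod 2) :=
  Matrix.of fun k v => A k v.1.2

/-- The sender neighborhood `N_u = {v_{(w,b)} ∈ V : B u b = 1}`. -/
def senderNbhd (R B : Matrix (Fin n) (Fin m) (ZMod 2)) (u : Fin n) : Set (Vtx R) :=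
  {v | B u v.1.2 = 1}

/-- A neighborhood partition `{Ñ_1, …, Ñ_n}`. -/
def IsNbhdPartition (R B : Matrix (Fin n) (Fin m) (ZMod 2))
    (N : Fin n → Set (Vtx R)) : Prop :=
  (∀ i, N i ⊆ senderNbhd R B i) ∧
  (∀ i j, i ≠ j → Disjoint (N i) (N j)) ∧
  (⋃ i, N i) = Set.univ

open Classical in
/-- `R^(i)`: the request matrix of the EIC subproblem induced by `Ñ_i`; it has ones
exactly at the requirement pairs whose vertex lies in `Ñ_i`. -/
noncomputable def Rsub (R : Matrix (Fin n) (Fin m) (ZMod 2))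
    (N : Fin n → Set (Vtx R)) (i : Fin n) : Matrix (Fin n) (Fin m) (ZMod 2) :=
  Matrix.of fun u a =>
    if hr : R u a = 1 then (if (⟨(u, a), hr⟩ : Vtx R) ∈ N i then 1 else 0) else 0

open Classical in
/-- `B^(i)`: the has-matrix of the EIC subproblem induced by `Ñ_i`; it agrees with `B`
on the columns of blocks requested in `Ñ_i` and is zero elsewhere. -/
noncomputable def Bsub (R B : Matrix (Fin n) (Fin m) (ZMod 2))
    (N : Fin n → Set (Vtx R)) (i : Fin n) : Matrix (Fin n) (Fin m) (ZMod 2) :=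
  Matrix.of fun u a => if ∃ v ∈ N i, v.1.2 = a then B u a else 0

/-- `Cl` is a clique for the edge relation `E`. -/
def IsClique {V : Type} (E : V → V → Prop) (Cl : Set V) : Prop :=
  ∀ k ∈ Cl, ∀ l ∈ Cl, k ≠ l → E k l

/-- `I` is an independent set for the edge relation `E` (no edge in either direction). -/
def IsIndep {V : Type} (E : V → V → Prop) (I : Set V) : Prop :=
  ∀ k ∈ I, ∀ l ∈ I, k ≠ l → ¬ E k l ∧ ¬ E l k

/-- `χ(Ḡ|_S)`: the minimum number of cliques of the induced subgraph `G|_S`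
needed to partition `S`. -/
noncomputable def cliqueCoverNum {V : Type} (E : V → V → Prop) (S : Set V) : ℕ :=
  sInf {t | ∃ Cl : Fin t → Set V, (∀ i, Cl i ⊆ S) ∧ (∀ i, IsClique E (Cl i)) ∧
    (∀ i j, i ≠ j → Disjoint (Cl i) (Cl j)) ∧ (⋃ i, Cl i) = S}

/-- `χ(G)`: the minimum number of independent sets of `G` needed to partition
its vertex set. -/
noncomputable def chromNum {V : Type} [Fintype V] (E : V → V → Prop) : ℕ :=
  sInf {t | ∃ I : Fin t → Set V, (∀ i, IsIndep E (I i)) ∧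
    (∀ i j, i ≠ j → Disjoint (I i) (I j)) ∧ (⋃ i, I i) = Set.univ}

/-- `ω(Ḡ|_S)`: the maximum size of an independent set of the induced subgraph `G|_S`. -/
noncomputable def indepNum {V : Type} (E : V → V → Prop) (S : Set V) : ℕ :=
  sSup {t | ∃ I ⊆ S, IsIndep E I ∧ I.ncard = t}

/-- The set of neighborhood-cliques: vertex sets of maximal cliques of the induced
subgraphs `G|_{N_i}`, over all senders `i`. -/
def nbhdCliques (R B : Matrix (Fin n) (Fin m) (ZMod 2)) : Set (Set (Vtx R)) :=
  {Cl | ∃ i : Fin n, Cl ⊆ senderNbhd R B i ∧ IsClique (probEdge R B) Cl ∧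
    ∀ Cl', Cl ⊆ Cl' → Cl' ⊆ senderNbhd R B i → IsClique (probEdge R B) Cl' → Cl' = Cl}

/-! A receiver `u` can cancel exactly the coordinates of a broadcast that lie in the support of
`B_u`. Hence a code `β` solves `(R, B)` iff the combinations formed by the receivers assemble into
a matrix `C * β` whose row at `v_{(u,a)}` agrees with `e_a` outside the support of `B_u`. On
requested columns this says precisely that `φ(C * β)` fits the problem graph, and unrequested
columns can be zeroed without affecting `φ`. Optimizing over `C` and `β` turns length into rank by
rank factorization. -/

section LinearAlgebra

variable {ι κ l K : Type*}

theorem exists_rank_factorization [Field K] [Fintype κ] (A : Matrix ι κ K) :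
    ∃ (C : Matrix ι (Fin A.rank) K) (D : Matrix (Fin A.rank) κ K), A = C * D := by
  have : Module.Finite K (Submodule.span K (Set.range A.col)) :=
    .span_of_finite K (Set.finite_range A.col)
  let b := Module.finBasisOfFinrankEq K _ A.rank_eq_finrank_span_cols.symm
  let col (j : κ) : Submodule.span K (Set.range A.col) := ⟨A.col j, Submodule.subset_span ⟨j, rfl⟩⟩
  refine ⟨.of fun i k => (b k : ι → K) i, .of fun k j => b.repr (col j) k, ?_⟩
  ext i j
  have expand_col : ∑ k, b.repr (col j) k • (b k : ι → K) = A.col j := by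
    simpa only [Submodule.coe_sum, Submodule.coe_smul] using
      congrArg Subtype.val (b.sum_repr (col j))
  simpa [Matrix.mul_apply, mul_comm] using (congrFun expand_col i).symm

theorem rank_submatrix_id_of_col_eq_zero [CommSemiring K] [Fintype κ] [Fintype l]
    {A : Matrix ι κ K} {f : l → κ} (hA : ∀ j ∉ Set.range f, A.col j = 0) :
    (A.submatrix id f).rank = A.rank := by
  rw [Matrix.rank_eq_finrank_span_cols, Matrix.rank_eq_finrank_span_cols]
  suffices Submodule.span K (Set.range (A.submatrix id f).col) =
      Submodule.span K (Set.range A.col) by rw [this]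
  refine le_antisymm (Submodule.span_mono (Set.range_comp_subset_range f A.col))
    (Submodule.span_le.2 ?_)
  rintro _ ⟨j, rfl⟩
  by_cases hj : j ∈ Set.range f
  · obtain ⟨k, rfl⟩ := hj
    exact Submodule.subset_span ⟨k, rfl⟩
  · rw [hA j hj]
    exact Submodule.zero_mem _

theorem exists_eq_vecMul_fromRows_diagonal_iff
    [DivisionRing K] [Fintype ι] [Fintype κ] [DecidableEq κ]
    {β : Matrix ι κ K} {d w : κ → K} :
    (∃ α : ι ⊕ κ → K, w = α ᵥ* Matrix.fromRows β (Matrix.diagonal d)) ↔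
      ∃ c : ι → K, ∀ j, d j = 0 → (c ᵥ* β) j = w j := by
  constructor
  · rintro ⟨α, rfl⟩
    refine ⟨α ∘ Sum.inl, fun j hj => ?_⟩
    simp [Matrix.vecMul_fromRows, Matrix.vecMul_diagonal, hj]
  · rintro ⟨c, hc⟩
    refine ⟨Sum.elim c fun j => (w j - (c ᵥ* β) j) / d j, ?_⟩
    ext j
    rw [Matrix.sumElim_vecMul_fromRows, Pi.add_apply, Matrix.vecMul_diagonal]
    by_cases hj : d j = 0
    · simp [hj, hc j hj]
    · rw [div_mul_cancel₀ _ hj, add_sub_cancel]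

end LinearAlgebra

section DecodingMatrix

theorem zmod_two_ne_one_iff {x : ZMod 2} : x ≠ 1 ↔ x = 0 := by
  decide +revert

variable {R B : Matrix (Fin n) (Fin m) (ZMod 2)}

/-- The rows of a decoding matrix are the combinations of broadcasts formed by the receivers:
outside the support of `B_u`, the row at `v_{(u,a)}` must equal `e_a`. -/
def IsDecodingMatrix (R B : Matrix (Fin n) (Fin m) (ZMod 2))
    (A : Matrix (Vtx R) (Fin m) (ZMod 2)) : Prop :=
  ∀ v b, B v.1.1 b = 0 → A v b = e m v.1.2 b

theorem isCentralizedSolution_iff_exists_mul {ι : Type} [Fintype ι]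
    {β : Matrix ι (Fin m) (ZMod 2)} :
    IsCentralizedSolution R B β ↔
      ∃ C : Matrix (Vtx R) ι (ZMod 2), IsDecodingMatrix R B (C * β) := by
  simp only [IsCentralizedSolution, exists_eq_vecMul_fromRows_diagonal_iff]
  constructor
  · intro hβ
    choose c hc using fun v : Vtx R => hβ v.1.1 v.1.2 v.2
    exact ⟨.of c, hc⟩
  · rintro ⟨C, hC⟩ u a hua
    exact ⟨C ⟨(u, a), hua⟩, hC ⟨(u, a), hua⟩⟩

theorem IsCentralizedSolution.exists_isDecodingMatrix_rank_le {h : ℕ}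
    {β : Matrix (Fin h) (Fin m) (ZMod 2)} (hβ : IsCentralizedSolution R B β) :
    ∃ A, IsDecodingMatrix R B A ∧ A.rank ≤ h := by
  obtain ⟨C, hC⟩ := isCentralizedSolution_iff_exists_mul.1 hβ
  refine ⟨C * β, hC, ?_⟩
  exact (Matrix.rank_mul_le_left C β).trans (C.rank_le_card_width.trans (Fintype.card_fin h).le)

theorem IsDecodingMatrix.exists_isCentralizedSolution {A : Matrix (Vtx R) (Fin m) (ZMod 2)}
    (hA : IsDecodingMatrix R B A) :
    ∃ β : Matrix (Fin A.rank) (Fin m) (ZMod 2), IsCentralizedSolution R B β := by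
  obtain ⟨C, β, hCβ⟩ := exists_rank_factorization A
  exact ⟨β, isCentralizedSolution_iff_exists_mul.2 ⟨C, hCβ ▸ hA⟩⟩

theorem IsDecodingMatrix.fits_phi (hdisj : DisjointSupports R B)
    {A : Matrix (Vtx R) (Fin m) (ZMod 2)} (hA : IsDecodingMatrix R B A) :
    Fits (probEdge R B) (phi R A) := by
  refine ⟨fun v => ?_, fun v w hvw hE => ?_⟩
  · have hB : B v.1.1 v.1.2 = 0 := zmod_two_ne_one_iff.1 fun hB => hdisj _ _ ⟨hB, v.2⟩
    exact (hA v _ hB).trans (Pi.single_eq_same _ _)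
  · obtain ⟨hB, hblock⟩ : B v.1.1 w.1.2 ≠ 1 ∧ v.1.2 ≠ w.1.2 := by
      simpa [probEdge, hvw] using hE
    exact (hA v _ (zmod_two_ne_one_iff.1 hB)).trans (Pi.single_eq_of_ne' hblock _)

theorem apply_eq_of_fits_phi {A : Matrix (Vtx R) (Fin m) (ZMod 2)}
    (hA : Fits (probEdge R B) (phi R A)) {v w : Vtx R} (hB : B v.1.1 w.1.2 = 0) :
    A v w.1.2 = e m v.1.2 w.1.2 := by
  obtain ⟨hdiag, hoff⟩ := hA
  by_cases hblock : v.1.2 = w.1.2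
  · rw [← hblock, e, Pi.single_eq_same]
    exact hdiag v
  · rw [e, Pi.single_eq_of_ne' hblock]
    have hvw : v ≠ w := fun h => hblock (congrArg (fun v => v.1.2) h)
    refine hoff v w hvw ?_
    rintro ⟨-, hhas | hsame⟩
    · exact zmod_two_ne_one_iff.2 hB hhas
    · exact hblock hsame

theorem rank_phi_le (A : Matrix (Vtx R) (Fin m) (ZMod 2)) : (phi R A).rank ≤ A.rank :=
  A.rank_submatrix_le id fun v : Vtx R => v.1.2

theorem exists_isDecodingMatrix_rank_eq_of_fits_phi
    {A : Matrix (Vtx R) (Fin m) (ZMod 2)} (hA : Fits (probEdge R B) (phi R A)) :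
    ∃ A', IsDecodingMatrix R B A' ∧ A'.rank = (phi R A).rank := by
  let block (v : Vtx R) : Fin m := v.1.2
  let A' : Matrix (Vtx R) (Fin m) (ZMod 2) := .of fun v => (Set.range block).indicator (A v)
  have hA' (v w : Vtx R) : A' v (block w) = A v (block w) :=
    Set.indicator_of_mem (Set.mem_range_self w) _
  have hA'_zero (v : Vtx R) {b : Fin m} (hb : b ∉ Set.range block) : A' v b = 0 :=
    Set.indicator_of_notMem hb _
  refine ⟨A', fun v b hB => ?_, ?_⟩
  · by_cases hb : b ∈ Set.range block
    · obtain ⟨w, rfl⟩ := hb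
      exact (hA' v w).trans (apply_eq_of_fits_phi hA hB)
    · rw [hA'_zero v hb, e, Pi.single_eq_of_ne]
      exact fun h => hb ⟨v, h.symm⟩
  · have hrank : (A'.submatrix id block).rank = A'.rank :=
      rank_submatrix_id_of_col_eq_zero fun b hb => funext fun v => hA'_zero v hb
    have hphi : A'.submatrix id block = phi R A := Matrix.ext hA'
    exact hrank.symm.trans (congrArg Matrix.rank hphi)

end DecodingMatrix

theorem centralized_eq_rminrk {n m : ℕ} (R B : Matrix (Fin n) (Fin m) (ZMod 2))
    (hdisj : DisjointSupports R B) :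
    Copt R B = rminrk (probEdge R B) (Set.range (phi R)) := by
  refine csInf_eq_csInf_of_forall_exists_le ?_ ?_
  · rintro h ⟨β, hβ⟩
    obtain ⟨A, hA, hrank⟩ := hβ.exists_isDecodingMatrix_rank_le
    exact ⟨_, ⟨_, ⟨A, rfl⟩, hA.fits_phi hdisj, rfl⟩, (rank_phi_le A).trans hrank⟩
  · rintro _ ⟨_, ⟨A, rfl⟩, hfits, rfl⟩
    obtain ⟨A', hA', hrank⟩ := exists_isDecodingMatrix_rank_eq_of_fits_phi hfits
    exact ⟨_, hA'.exists_isCentralizedSolution, hrank.le⟩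

end EIC
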